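/- On any almost quaternion-Hermitian manifold, for any local adapted basis I,J,K the exterior derivatives of the local Kähler forms satisfy the contraction identity IΛ_K dω_J + IΛ_J dω_K = −Λ_J dω_J + Λ_K dω_K, together with the identities obtained by cyclic permutation of (I,J,K). -/

import Mathlib

/-!  Synthetic (Koszul-style) model of an almost quaternion-Hermitian `4n`-manifold.

`C` plays the role of the commutative ℝ-algebra of smooth functions and `V` that of
the `C`-module of vector fields, equipped with a directional derivative `D`, a Lie
bracket, a Riemannian metric `g` together with its Levi-Civita connection `nab`
(characterised by being torsion-free and metric), a local adapted basis `I, J, K`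
of anticommuting almost complex structures with `K = I J`, each compatible with the
metric, and a (local) orthonormal frame.  -/

noncomputable section

open scoped BigOperators

structure AQH (n : ℕ) (C : Type*) (V : Type*) [CommRing C] [Algebra ℝ C]
    [AddCommGroup V] [Module C V] where
  /-- derivative of a function along a vector field -/
  D : V → C → C
  D_add : ∀ X f g, D X (f + g) = D X f + D X g
  D_mul : ∀ X f g, D X (f * g) = f * D X g + g * D X f
  D_const : ∀ X (r : ℝ), D X (algebraMap ℝ C r) = 0
  D_addX : ∀ X Y f, D (X + Y) f = D X f + D Y f
  D_smulX : ∀ (f : C) (X : V) (h : C), D (f • X) h = f * D X h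
  /-- the Lie bracket of vector fields -/
  bracket : V → V → V
  bracket_skew : ∀ X Y, bracket X Y = -bracket Y X
  bracket_add : ∀ X Y Z, bracket X (Y + Z) = bracket X Y + bracket X Z
  bracket_smul : ∀ X (f : C) Y, bracket X (f • Y) = f • bracket X Y + (D X f) • Y
  bracket_jacobi : ∀ X Y Z,
    bracket X (bracket Y Z) + bracket Y (bracket Z X) + bracket Z (bracket X Y) = 0
  D_bracket : ∀ X Y f, D (bracket X Y) f = D X (D Y f) - D Y (D X f)
  /-- the Riemannian metric -/
  g : V → V → C
  g_symm : ∀ X Y, g X Y = g Y X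
  g_add : ∀ X Y Z, g (X + Y) Z = g X Z + g Y Z
  g_smul : ∀ (f : C) X Y, g (f • X) Y = f * g X Y
  /-- the Levi-Civita connection -/
  nab : V → V → V
  nab_addX : ∀ X Y Z, nab (X + Y) Z = nab X Z + nab Y Z
  nab_smulX : ∀ (f : C) X Y, nab (f • X) Y = f • nab X Y
  nab_add : ∀ X Y Z, nab X (Y + Z) = nab X Y + nab X Z
  nab_leibniz : ∀ X (f : C) Y, nab X (f • Y) = f • nab X Y + (D X f) • Y
  torsion_free : ∀ X Y, nab X Y - nab Y X = bracket X Y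
  nab_metric : ∀ X Y Z, D X (g Y Z) = g (nab X Y) Z + g Y (nab X Z)
  /-- the (local) adapted basis of almost complex structures -/
  I : V → V
  J : V → V
  K : V → V
  I_lin : ∀ (f : C) X Y, I (f • X + Y) = f • I X + I Y
  J_lin : ∀ (f : C) X Y, J (f • X + Y) = f • J X + J Y
  K_lin : ∀ (f : C) X Y, K (f • X + Y) = f • K X + K Y
  I_sq : ∀ X, I (I X) = -X
  J_sq : ∀ X, J (J X) = -X
  K_def : ∀ X, K X = I (J X)
  anticomm : ∀ X, I (J X) = -J (I X)
  I_metric : ∀ X Y, g (I X) (I Y) = g X Y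
  J_metric : ∀ X Y, g (J X) (J Y) = g X Y
  /-- a (local) orthonormal frame -/
  frame : Fin (4 * n) → V
  frame_orthonormal : ∀ i j, g (frame i) (frame j) = if i = j then 1 else 0
  frame_span : ∀ X, X = ∑ i, g X (frame i) • frame i

namespace AQH

section ops

variable {C V : Type*} [CommRing C]

/-- the operator `A_(1)` on covariant 3-tensors -/
def op1 (A : V → V) (ψ : V → V → V → C) : V → V → V → C := fun X Y Z => -ψ (A X) Y Z

/-- the operator `A_(2)` on covariant 3-tensors -/
def op2 (A : V → V) (ψ : V → V → V → C) : V → V → V → C := fun X Y Z => -ψ X (A Y) Z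

/-- the operator `A_(3)` on covariant 3-tensors -/
def op3 (A : V → V) (ψ : V → V → V → C) : V → V → V → C := fun X Y Z => -ψ X Y (A Z)

/-- the operator `A_(12) = A_(1) A_(2)` on covariant 3-tensors -/
def op12 (A : V → V) (ψ : V → V → V → C) : V → V → V → C := fun X Y Z => ψ (A X) (A Y) Z

/-- the operator `A_(13) = A_(1) A_(3)` on covariant 3-tensors -/
def op13 (A : V → V) (ψ : V → V → V → C) : V → V → V → C := fun X Y Z => ψ (A X) Y (A Z)

/-- the operator `A_(23) = A_(2) A_(3)` on covariant 3-tensors -/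
def op23 (A : V → V) (ψ : V → V → V → C) : V → V → V → C := fun X Y Z => ψ X (A Y) (A Z)

/-- the operator `𝓛_A = A_(12) + A_(13) + A_(23)` on three-forms -/
def calL (A : V → V) (ψ : V → V → V → C) : V → V → V → C :=
  fun X Y Z => op12 A ψ X Y Z + op13 A ψ X Y Z + op23 A ψ X Y Z

/-- the action `(A ν)(X) = -ν (A X)` of `A` on a one-form -/
def act1 (A : V → V) (ν : V → C) : V → C := fun X => -ν (A X)

/-- the action `(A ψ)(X,Y,Z) = -ψ(AX,AY,AZ)` of `A` on a three-form -/
def act3 (A : V → V) (ψ : V → V → V → C) : V → V → V → C :=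
  fun X Y Z => -ψ (A X) (A Y) (A Z)

/-- wedge product of two one-forms -/
def wedge11 (α β : V → C) : V → V → C := fun X Y => α X * β Y - α Y * β X

/-- wedge product of a one-form and a two-form -/
def wedge12 (ν : V → C) (ω : V → V → C) : V → V → V → C :=
  fun X Y Z => ν X * ω Y Z - ν Y * ω X Z + ν Z * ω X Y

/-- wedge product of two two-forms -/
def wedge22 (α β : V → V → C) : V → V → V → V → C := fun X Y Z W =>
  α X Y * β Z W - α X Z * β Y W + α X W * β Y Z
    + α Z W * β X Y - α Y W * β X Z + α Y Z * β X W

/-- a (0,3)-tensor is an alternating three-form -/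
def IsAlt3 (T : V → V → V → C) : Prop :=
  (∀ X Y Z, T Y X Z = -T X Y Z) ∧ (∀ X Y Z, T X Z Y = -T X Y Z)

variable [AddCommGroup V] [Module C V]

/-- `C`-linearity (tensoriality) of a three-form in its first argument -/
def Lin3 (T : V → V → V → C) : Prop :=
  ∀ (f : C) X X' Y Z, T (f • X + X') Y Z = f * T X Y Z + T X' Y Z

/-- `C`-linearity (tensoriality) of a one-form -/
def Lin1 (ν : V → C) : Prop := ∀ (f : C) X X', ν (f • X + X') = f * ν X + ν X'

end ops

section derived

variable {n : ℕ} {C V : Type*} [CommRing C] [Algebra ℝ C] [AddCommGroup V] [Module C V]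
  [Module ℝ V] [IsScalarTower ℝ C V]

variable (M : AQH n C V)

/-- the Kähler form `ω_A(X,Y) = g(X, A Y)` -/
def omega (A : V → V) : V → V → C := fun X Y => M.g X (A Y)

/-- `(∇_X A) Y` -/
def nabA (A : V → V) : V → V → V := fun X Y => M.nab X (A Y) - A (M.nab X Y)

/-- covariant derivative of a 2-form: `(∇_X ψ)(Y,Z)` -/
def nab2 (ψ : V → V → C) : V → V → V → C :=
  fun X Y Z => M.D X (ψ Y Z) - ψ (M.nab X Y) Z - ψ Y (M.nab X Z)

/-- covariant derivative of a 4-form -/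
def nab4 (ψ : V → V → V → V → C) : V → V → V → V → V → C :=
  fun X Y Z W U => M.D X (ψ Y Z W U) - ψ (M.nab X Y) Z W U - ψ Y (M.nab X Z) W U
    - ψ Y Z (M.nab X W) U - ψ Y Z W (M.nab X U)

/-- exterior derivative of a one-form -/
def d1 (ν : V → C) : V → V → C :=
  fun X Y => M.D X (ν Y) - M.D Y (ν X) - ν (M.bracket X Y)

/-- exterior derivative of a two-form -/
def d2 (ψ : V → V → C) : V → V → V → C :=
  fun X Y Z => M.D X (ψ Y Z) - M.D Y (ψ X Z) + M.D Z (ψ X Y)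
    - ψ (M.bracket X Y) Z + ψ (M.bracket X Z) Y - ψ (M.bracket Y Z) X

/-- exterior derivative of a four-form -/
def d4 (ψ : V → V → V → V → C) : V → V → V → V → V → C := fun X Y Z W U =>
  M.D X (ψ Y Z W U) - M.D Y (ψ X Z W U) + M.D Z (ψ X Y W U) - M.D W (ψ X Y Z U)
      + M.D U (ψ X Y Z W)
    - ψ (M.bracket X Y) Z W U + ψ (M.bracket X Z) Y W U - ψ (M.bracket X W) Y Z U
      + ψ (M.bracket X U) Y Z W
    - ψ (M.bracket Y Z) X W U + ψ (M.bracket Y W) X Z U - ψ (M.bracket Y U) X Z W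
    - ψ (M.bracket Z W) X Y U + ψ (M.bracket Z U) X Y W
    - ψ (M.bracket W U) X Y Z

/-- the Nijenhuis tensor `N_A(X,Y)` -/
def nijV (A : V → V) : V → V → V := fun X Y =>
  M.bracket X Y + A (M.bracket (A X) Y) + A (M.bracket X (A Y)) - M.bracket (A X) (A Y)

/-- the Nijenhuis `(0,3)`-tensor `N_A(X,Y,Z) = g(X, N_A(Y,Z))` -/
def nij3 (A : V → V) : V → V → V → C := fun X Y Z => M.g X (M.nijV A Y Z)

/-- the induced inner product of two 2-forms,
`⟨ψ,φ⟩ = (1/2!) ψ(e_i,e_j) φ(e_i,e_j)` -/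
def inner2 (ψ φ : V → V → C) : C :=
  (1/2 : ℝ) • ∑ i, ∑ j, ψ (M.frame i) (M.frame j) * φ (M.frame i) (M.frame j)

/-- the contraction `(Λ_A β)(X) = ⟨X ⌟ β, ω_A⟩` of a three-form -/
def Lam (A : V → V) (β : V → V → V → C) : V → C :=
  fun X => (1/2 : ℝ) •
    ∑ i, ∑ j, β X (M.frame i) (M.frame j) * M.omega A (M.frame i) (M.frame j)

/-- `λ_I(X) = (1/2n) ⟨∇_X ω_J, ω_K⟩` -/
def lambdaI : V → C := fun X =>
  (1/(2*(n:ℝ))) • M.inner2 (fun Y Z => M.nab2 (M.omega M.J) X Y Z) (M.omega M.K)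

/-- `λ_J(X) = (1/2n) ⟨∇_X ω_K, ω_I⟩` -/
def lambdaJ : V → C := fun X =>
  (1/(2*(n:ℝ))) • M.inner2 (fun Y Z => M.nab2 (M.omega M.K) X Y Z) (M.omega M.I)

/-- `λ_K(X) = (1/2n) ⟨∇_X ω_I, ω_J⟩` -/
def lambdaK : V → C := fun X =>
  (1/(2*(n:ℝ))) • M.inner2 (fun Y Z => M.nab2 (M.omega M.I) X Y Z) (M.omega M.J)

/-- codifferential of a two-form -/
def codiff2 (ψ : V → V → C) : V → C := fun Z => -∑ i, M.nab2 ψ (M.frame i) (M.frame i) Z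

/-- codifferential of a four-form -/
def codiff4 (ψ : V → V → V → V → C) : V → V → V → C :=
  fun X Y Z => -∑ i, M.nab4 ψ (M.frame i) (M.frame i) X Y Z

/-- `β_I = J dω_J + K dω_K` -/
def betaI : V → V → V → C := fun X Y Z =>
  act3 M.J (M.d2 (M.omega M.J)) X Y Z + act3 M.K (M.d2 (M.omega M.K)) X Y Z

/-- `β_J = K dω_K + I dω_I` -/
def betaJ : V → V → V → C := fun X Y Z =>
  act3 M.K (M.d2 (M.omega M.K)) X Y Z + act3 M.I (M.d2 (M.omega M.I)) X Y Z

/-- `β_K = I dω_I + J dω_J` -/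
def betaK : V → V → V → C := fun X Y Z =>
  act3 M.I (M.d2 (M.omega M.I)) X Y Z + act3 M.J (M.d2 (M.omega M.J)) X Y Z

/-- the intrinsic torsion
`ξ_X Y = -(1/4) Σ_A A (∇_X A) Y + (1/2) Σ_A λ_A(X) A Y` -/
def xi : V → V → V := fun X Y =>
  (-(1/4 : ℝ)) • (M.I (M.nabA M.I X Y) + M.J (M.nabA M.J X Y) + M.K (M.nabA M.K X Y))
    + (1/2 : ℝ) • (M.lambdaI X • M.I Y + M.lambdaJ X • M.J Y + M.lambdaK X • M.K Y)

/-- the one-form `ν^I_4 = I Λ_I β_I` -/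
def nu4I : V → C := act1 M.I (M.Lam M.I M.betaI)

/-- the one-form `ν^J_4 = J Λ_J β_J` -/
def nu4J : V → C := act1 M.J (M.Lam M.J M.betaJ)

/-- the one-form `ν^K_4 = K Λ_K β_K` -/
def nu4K : V → C := act1 M.K (M.Lam M.K M.betaK)

/-- `ν^I_3`, determined by `J Λ_J β_I = (1/(2n-1)) (ν^I_4 + (2n+1)(n-1) ν^I_3)` -/
def nu3I : V → C := fun X =>
  (1/((2*(n:ℝ)+1) * ((n:ℝ)-1))) •
    ((2*(n:ℝ)-1) • act1 M.J (M.Lam M.J M.betaI) X - M.nu4I X)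

/-- `ν^J_3`, determined by `K Λ_K β_J = (1/(2n-1)) (ν^J_4 + (2n+1)(n-1) ν^J_3)` -/
def nu3J : V → C := fun X =>
  (1/((2*(n:ℝ)+1) * ((n:ℝ)-1))) •
    ((2*(n:ℝ)-1) • act1 M.K (M.Lam M.K M.betaJ) X - M.nu4J X)

/-- `ν^K_3`, determined by `I Λ_I β_K = (1/(2n-1)) (ν^K_4 + (2n+1)(n-1) ν^K_3)` -/
def nu3K : V → C := fun X =>
  (1/((2*(n:ℝ)+1) * ((n:ℝ)-1))) •
    ((2*(n:ℝ)-1) • act1 M.I (M.Lam M.I M.betaK) X - M.nu4K X)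

/-- `β^{(E)}_{3I} = -(1/2) Jν^I_3 ∧ ω_J - (1/2) Kν^I_3 ∧ ω_K + (1/(2n-1)) Iν^I_3 ∧ ω_I` -/
def betaE3I : V → V → V → C := fun X Y Z =>
  (-(1/2:ℝ)) • wedge12 (act1 M.J M.nu3I) (M.omega M.J) X Y Z
    + (-(1/2:ℝ)) • wedge12 (act1 M.K M.nu3I) (M.omega M.K) X Y Z
    + (1/(2*(n:ℝ)-1)) • wedge12 (act1 M.I M.nu3I) (M.omega M.I) X Y Z

def betaE3J : V → V → V → C := fun X Y Z =>
  (-(1/2:ℝ)) • wedge12 (act1 M.K M.nu3J) (M.omega M.K) X Y Z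
    + (-(1/2:ℝ)) • wedge12 (act1 M.I M.nu3J) (M.omega M.I) X Y Z
    + (1/(2*(n:ℝ)-1)) • wedge12 (act1 M.J M.nu3J) (M.omega M.J) X Y Z

def betaE3K : V → V → V → C := fun X Y Z =>
  (-(1/2:ℝ)) • wedge12 (act1 M.I M.nu3K) (M.omega M.I) X Y Z
    + (-(1/2:ℝ)) • wedge12 (act1 M.J M.nu3K) (M.omega M.J) X Y Z
    + (1/(2*(n:ℝ)-1)) • wedge12 (act1 M.K M.nu3K) (M.omega M.K) X Y Z

/-- `β_{4I} = -(1/(2n-1)) Iν^I_4 ∧ ω_I` -/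
def beta4I : V → V → V → C := fun X Y Z =>
  (-(1/(2*(n:ℝ)-1))) • wedge12 (act1 M.I M.nu4I) (M.omega M.I) X Y Z

def beta4J : V → V → V → C := fun X Y Z =>
  (-(1/(2*(n:ℝ)-1))) • wedge12 (act1 M.J M.nu4J) (M.omega M.J) X Y Z

def beta4K : V → V → V → C := fun X Y Z =>
  (-(1/(2*(n:ℝ)-1))) • wedge12 (act1 M.K M.nu4K) (M.omega M.K) X Y Z

/-- `β_I^{(3+K)} = β_I - β^{(E)}_{3I} - β_{4I}` -/
def beta3KI : V → V → V → C := fun X Y Z => M.betaI X Y Z - M.betaE3I X Y Z - M.beta4I X Y Z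

def beta3KJ : V → V → V → C := fun X Y Z => M.betaJ X Y Z - M.betaE3J X Y Z - M.beta4J X Y Z

def beta3KK : V → V → V → C := fun X Y Z => M.betaK X Y Z - M.betaE3K X Y Z - M.beta4K X Y Z

/-- `β_I^{(3)} = (1/6) (2 - 𝓛_J - 𝓛_K) β_I^{(3+K)}` -/
def beta3I : V → V → V → C := fun X Y Z =>
  (1/6:ℝ) • ((2:ℝ) • M.beta3KI X Y Z - calL M.J M.beta3KI X Y Z - calL M.K M.beta3KI X Y Z)

def beta3J : V → V → V → C := fun X Y Z =>
  (1/6:ℝ) • ((2:ℝ) • M.beta3KJ X Y Z - calL M.K M.beta3KJ X Y Z - calL M.I M.beta3KJ X Y Z)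

def beta3K : V → V → V → C := fun X Y Z =>
  (1/6:ℝ) • ((2:ℝ) • M.beta3KK X Y Z - calL M.I M.beta3KK X Y Z - calL M.J M.beta3KK X Y Z)

/-- `β_I^{(K)} = (1/6) (4 + 𝓛_J + 𝓛_K) β_I^{(3+K)}` -/
def betaKI : V → V → V → C := fun X Y Z =>
  (1/6:ℝ) • ((4:ℝ) • M.beta3KI X Y Z + calL M.J M.beta3KI X Y Z + calL M.K M.beta3KI X Y Z)

def betaKJ : V → V → V → C := fun X Y Z =>
  (1/6:ℝ) • ((4:ℝ) • M.beta3KJ X Y Z + calL M.K M.beta3KJ X Y Z + calL M.I M.beta3KJ X Y Z)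

def betaKK : V → V → V → C := fun X Y Z =>
  (1/6:ℝ) • ((4:ℝ) • M.beta3KK X Y Z + calL M.I M.beta3KK X Y Z + calL M.J M.beta3KK X Y Z)

/-- the three-form `ψ^{(3)} = (1/12)(β_I^{(3)} + β_J^{(3)} + β_K^{(3)})` determining `ξ_{33}` -/
def psi3 : V → V → V → C := fun X Y Z =>
  (1/12:ℝ) • (M.beta3I X Y Z + M.beta3J X Y Z + M.beta3K X Y Z)

/-- the three-form `ψ^{(K)} = -(1/48)(β_I^{(K)} + β_J^{(K)} + β_K^{(K)})` determining `ξ_{KH}` -/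
def psiK : V → V → V → C := fun X Y Z =>
  (-(1/48:ℝ)) • (M.betaKI X Y Z + M.betaKJ X Y Z + M.betaKK X Y Z)

/-- the three-form `ψ^{(3)}_I` determining `ξ_{3H}` -/
def psi3I : V → V → V → C := fun X Y Z =>
  (-(1/8:ℝ)) • M.beta3I X Y Z
    + (1/48:ℝ) • ((3:ℝ) • (M.beta3I X Y Z + M.beta3J X Y Z + M.beta3K X Y Z)
        + calL M.I (fun a b c => M.beta3I a b c + M.beta3J a b c + M.beta3K a b c) X Y Z)

def psi3J : V → V → V → C := fun X Y Z =>
  (-(1/8:ℝ)) • M.beta3J X Y Z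
    + (1/48:ℝ) • ((3:ℝ) • (M.beta3I X Y Z + M.beta3J X Y Z + M.beta3K X Y Z)
        + calL M.J (fun a b c => M.beta3I a b c + M.beta3J a b c + M.beta3K a b c) X Y Z)

def psi3K : V → V → V → C := fun X Y Z =>
  (-(1/8:ℝ)) • M.beta3K X Y Z
    + (1/48:ℝ) • ((3:ℝ) • (M.beta3I X Y Z + M.beta3J X Y Z + M.beta3K X Y Z)
        + calL M.K (fun a b c => M.beta3I a b c + M.beta3J a b c + M.beta3K a b c) X Y Z)

/-- the three-form `ψ^{(K)}_I` determining `ξ_{K3}` -/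
def psiKI : V → V → V → C := fun X Y Z =>
  (-(1/2:ℝ)) • M.betaKI X Y Z
    + (1/6:ℝ) • (M.betaKI X Y Z + M.betaKJ X Y Z + M.betaKK X Y Z)

def psiKJ : V → V → V → C := fun X Y Z =>
  (-(1/2:ℝ)) • M.betaKJ X Y Z
    + (1/6:ℝ) • (M.betaKI X Y Z + M.betaKJ X Y Z + M.betaKK X Y Z)

def psiKK : V → V → V → C := fun X Y Z =>
  (-(1/2:ℝ)) • M.betaKK X Y Z
    + (1/6:ℝ) • (M.betaKI X Y Z + M.betaKJ X Y Z + M.betaKK X Y Z)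

/-- the one-form `θ^ξ` determining `ξ_{EH}`,
defined by `(6/n)(2n+1)(n-1) θ^ξ(X) = -⟨ξ_{e_i} e_i, X⟩` -/
def thetaXi : V → C := fun X =>
  (-((n:ℝ)/(6*(2*(n:ℝ)+1)*((n:ℝ)-1)))) • ∑ i, M.g (M.xi (M.frame i) (M.frame i)) X

/-- the local one-form `θ^ξ_I`, defined by `(2/n)(2n+1)(n-1) θ^ξ_I(X) = -⟨I ξ_{e_i} I e_i, X⟩` -/
def thetaXiI : V → C := fun X =>
  (-((n:ℝ)/(2*(2*(n:ℝ)+1)*((n:ℝ)-1)))) •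
    ∑ i, M.g (M.I (M.xi (M.frame i) (M.I (M.frame i)))) X

def thetaXiJ : V → C := fun X =>
  (-((n:ℝ)/(2*(2*(n:ℝ)+1)*((n:ℝ)-1)))) •
    ∑ i, M.g (M.J (M.xi (M.frame i) (M.J (M.frame i)))) X

def thetaXiK : V → C := fun X =>
  (-((n:ℝ)/(2*(2*(n:ℝ)+1)*((n:ℝ)-1)))) •
    ∑ i, M.g (M.K (M.xi (M.frame i) (M.K (M.frame i)))) X

/-- `α_I = -λ_I ⊗ g + (1/2)(J_(2) - J_(3)) ∇ω_K` -/
def alphaI : V → V → V → C := fun X Y Z =>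
  -(M.lambdaI X * M.g Y Z)
    + (1/2:ℝ) • (-(M.nab2 (M.omega M.K) X (M.J Y) Z) + M.nab2 (M.omega M.K) X Y (M.J Z))

def alphaJ : V → V → V → C := fun X Y Z =>
  -(M.lambdaJ X * M.g Y Z)
    + (1/2:ℝ) • (-(M.nab2 (M.omega M.I) X (M.K Y) Z) + M.nab2 (M.omega M.I) X Y (M.K Z))

def alphaK : V → V → V → C := fun X Y Z =>
  -(M.lambdaK X * M.g Y Z)
    + (1/2:ℝ) • (-(M.nab2 (M.omega M.J) X (M.I Y) Z) + M.nab2 (M.omega M.J) X Y (M.I Z))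

/-- the one-form `η_I(X) = α_I(e_i; e_i, X)` -/
def etaI : V → C := fun X => ∑ i, M.alphaI (M.frame i) (M.frame i) X

def etaJ : V → C := fun X => ∑ i, M.alphaJ (M.frame i) (M.frame i) X

def etaK : V → C := fun X => ∑ i, M.alphaK (M.frame i) (M.frame i) X

/-- the fundamental four-form `Ω = Σ_A ω_A ∧ ω_A` -/
def Omega4 : V → V → V → V → C := fun X Y Z W =>
  wedge22 (M.omega M.I) (M.omega M.I) X Y Z W
    + wedge22 (M.omega M.J) (M.omega M.J) X Y Z W
    + wedge22 (M.omega M.K) (M.omega M.K) X Y Z W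

/-- the one-form `θ^{d*Ω} = (1/3) Σ_A A Λ_A d*Ω` -/
def thetaDOmega : V → C := fun X =>
  (1/3:ℝ) • (act1 M.I (M.Lam M.I (M.codiff4 M.Omega4)) X
    + act1 M.J (M.Lam M.J (M.codiff4 M.Omega4)) X
    + act1 M.K (M.Lam M.K (M.codiff4 M.Omega4)) X)

/-- the vector-valued torsion: `g(W, T(X,Y)) = T(W,X,Y)` -/
def Tvec (T : V → V → V → C) : V → V → V := fun X Y => ∑ i, T (M.frame i) X Y • M.frame i

/-- the connection `∇ + (1/2) T` associated to a torsion (0,3)-tensor `T` -/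
def nabT (T : V → V → V → C) : V → V → V := fun X Y => M.nab X Y + (1/2:ℝ) • M.Tvec T X Y

/-- a connection is metric -/
def MetricConn (nab' : V → V → V) : Prop :=
  ∀ X Y Z, M.D X (M.g Y Z) = M.g (nab' X Y) Z + M.g Y (nab' X Z)

/-- a connection is quaternionic, with associated local one-forms `γ_I, γ_J, γ_K`:
`∇'_X I = γ_K(X) J - γ_J(X) K`, and cyclically -/
def QuatConn (nab' : V → V → V) (γI γJ γK : V → C) : Prop :=
  (∀ X Y, nab' X (M.I Y) - M.I (nab' X Y) = γK X • M.J Y - γJ X • M.K Y) ∧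
  (∀ X Y, nab' X (M.J Y) - M.J (nab' X Y) = γI X • M.K Y - γK X • M.I Y) ∧
  (∀ X Y, nab' X (M.K Y) - M.K (nab' X Y) = γJ X • M.I Y - γI X • M.J Y)

/-- the HKT condition: `I, J, K` integrable and there is a metric connection
`∇ + (1/2)T` with totally skew torsion making `I, J, K` parallel -/
def IsHKT : Prop :=
  (∀ X Y, M.nijV M.I X Y = 0) ∧ (∀ X Y, M.nijV M.J X Y = 0) ∧
  (∀ X Y, M.nijV M.K X Y = 0) ∧
  ∃ T : V → V → V → C, IsAlt3 T ∧ Lin3 T ∧ M.MetricConn (M.nabT T) ∧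
    (∀ X Y, M.nabT T X (M.I Y) = M.I (M.nabT T X Y)) ∧
    (∀ X Y, M.nabT T X (M.J Y) = M.J (M.nabT T X Y)) ∧
    (∀ X Y, M.nabT T X (M.K Y) = M.K (M.nabT T X Y))

/-- membership of a three-form in `KH`: type `{2,1}` for each `A` and `Λ_A ψ = 0` -/
def InKH3 (ψ : V → V → V → C) : Prop :=
  IsAlt3 ψ ∧ Lin3 ψ ∧
  calL M.I ψ = ψ ∧ calL M.J ψ = ψ ∧ calL M.K ψ = ψ ∧
  M.Lam M.I ψ = 0 ∧ M.Lam M.J ψ = 0 ∧ M.Lam M.K ψ = 0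

/-- the `(0,3)`-tensor of the `KH`-component of the torsion determined by `ψ^{(K)}`:
`3ψ - Σ_A A_(23) ψ` -/
def xiKH3 (ψ : V → V → V → C) : V → V → V → C := fun X Y Z =>
  (3:ℝ) • ψ X Y Z - (op23 M.I ψ X Y Z + op23 M.J ψ X Y Z + op23 M.K ψ X Y Z)

/-- the `(0,3)`-tensor of the `EH`-component of the torsion determined by the
one-form `θ`: `3 e_i ⊗ e_i ∧ θ - Σ_A (e_i ⊗ A e_i ∧ A θ + (2/n) A θ ⊗ ω_A)` -/
def xiEH3 (θ : V → C) : V → V → V → C := fun X Y Z =>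
  (3:ℝ) • ∑ i, M.g (M.frame i) X *
      (M.g (M.frame i) Y * θ Z - M.g (M.frame i) Z * θ Y)
  - ((∑ i, M.g (M.frame i) X *
        (M.g (M.I (M.frame i)) Y * act1 M.I θ Z - M.g (M.I (M.frame i)) Z * act1 M.I θ Y))
    + (∑ i, M.g (M.frame i) X *
        (M.g (M.J (M.frame i)) Y * act1 M.J θ Z - M.g (M.J (M.frame i)) Z * act1 M.J θ Y))
    + (∑ i, M.g (M.frame i) X *
        (M.g (M.K (M.frame i)) Y * act1 M.K θ Z - M.g (M.K (M.frame i)) Z * act1 M.K θ Y)))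
  - (2/(n:ℝ)) • (act1 M.I θ X * M.omega M.I Y Z + act1 M.J θ X * M.omega M.J Y Z
      + act1 M.K θ X * M.omega M.K Y Z)

/-- the intrinsic torsion lies in `(K+E)H`: it is the sum of a `KH`-tensor and an
`EH`-tensor as described in §3 of the paper -/
def inKEH : Prop :=
  ∃ (ψ : V → V → V → C) (θ : V → C), M.InKH3 ψ ∧ Lin1 θ ∧
    ∀ X Y Z, M.g Y (M.xi X Z) = M.xiKH3 ψ X Y Z + M.xiEH3 θ X Y Z

end derived

end AQH

/-!  The Lee-form identity `Λ_A dω_A = -A d*ω_A` polarises: if `A` and `B` are skew-adjoint and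
`AB + BA` is parallel, then `Λ_B dω_A + Λ_A dω_B = -(A d*ω_B + B d*ω_A)`.  Indeed
`Λ_B dω_A(X) = -½ tr(B ∇_X A) + ⟨X, ∑ (∇_{e_i} A) B e_i⟩`; differentiating `AB + BA`, the trace
terms of the two summands cancel, and in the second terms `B` and `A` move outside the derivative.
For an adapted basis this applies to the pairs `(J, J)`, `(K, K)` and `(J, K)`, and
`I (J d*ω_K + K d*ω_J) = K d*ω_K - J d*ω_J` because `IJ = K` and `IK = -J`.  -/

namespace AQH

theorem isSkewAdjoint_iff {R N : Type*} [CommRing R] [AddCommGroup N] [Module R N]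
    {B : LinearMap.BilinForm R N} {f : N → N} :
    B.IsSkewAdjoint f ↔ ∀ x y, B (f x) y = -B x (f y) := by
  simp only [LinearMap.IsSkewAdjoint, LinearMap.IsAdjointPair, Pi.neg_apply, map_neg]

variable {n : ℕ} {C V : Type*} [CommRing C] [Algebra ℝ C] [AddCommGroup V] [Module C V]
  (M : AQH n C V)

section Metric

/-- The Riemannian metric as a bilinear form over the ring of functions. -/
def metric : LinearMap.BilinForm C V :=
  LinearMap.mk₂ C M.g M.g_add M.g_smul
    (fun X Y Z => by rw [M.g_symm, M.g_add, M.g_symm Y, M.g_symm Z])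
    (fun f X Y => by rw [M.g_symm, M.g_smul, M.g_symm Y, smul_eq_mul])

theorem metric_comm (X Y : V) : M.metric X Y = M.metric Y X :=
  M.g_symm X Y

theorem metric_frame_frame (i j : Fin (4 * n)) :
    M.metric (M.frame i) (M.frame j) = if i = j then 1 else 0 :=
  M.frame_orthonormal i j

/-- The orthonormal frame as a basis of the module of vector fields. -/
def frameBasis : Module.Basis (Fin (4 * n)) C V :=
  .ofEquivFun
    { toFun := fun X i => M.metric X (M.frame i)
      map_add' := fun X Y => by ext; simp
      map_smul' := fun f X => by ext; simp
      invFun := fun c => ∑ i, c i • M.frame i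
      left_inv := fun X => (M.frame_span X).symm
      right_inv := fun c => by ext; simp [metric_frame_frame] }

theorem frameBasis_repr_apply (X : V) (i : Fin (4 * n)) :
    M.frameBasis.repr X i = M.metric X (M.frame i) :=
  rfl

theorem coe_frameBasis : ⇑M.frameBasis = M.frame := by
  ext i
  rw [Module.Basis.apply_eq_iff]
  ext j
  rw [frameBasis_repr_apply, metric_frame_frame, Finsupp.single_apply]

theorem trace_eq_sum_metric (T : Module.End C V) :
    LinearMap.trace C V T = ∑ i, M.metric (M.frame i) (T (M.frame i)) := by
  simp only [LinearMap.trace_eq_matrix_trace C M.frameBasis, Matrix.trace, Matrix.diag_apply,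
    LinearMap.toMatrix_apply, frameBasis_repr_apply, coe_frameBasis, M.metric_comm (T _)]

theorem sum_apply_frame_mul_metric (φ : V →ₗ[C] C) (X : V) :
    ∑ i, φ (M.frame i) * M.metric (M.frame i) X = φ X := by
  conv_rhs => rw [← M.frameBasis.sum_repr X, map_sum]
  simp only [map_smul, smul_eq_mul, frameBasis_repr_apply, coe_frameBasis, M.metric_comm X,
    mul_comm]

theorem Lam_eq_sum (B : V → V) {β : V → V → V → C} (hβ : ∀ X Z, IsLinearMap C fun Y => β X Y Z)
    (X : V) :
    M.Lam B β X = (1 / 2 : ℝ) • ∑ i, β X (B (M.frame i)) (M.frame i) := by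
  rw [Lam, Finset.sum_comm]
  congr 1
  exact Finset.sum_congr rfl fun j _ =>
    M.sum_apply_frame_mul_metric (hβ X (M.frame j)).mk' (B (M.frame j))

end Metric

section CovariantDerivative

theorem D_neg (X : V) (f : C) : M.D X (-f) = -M.D X f :=
  (AddMonoidHom.mk' (M.D X) (M.D_add X)).map_neg f

theorem d2_eq_cyclic_sum_nab2 (ψ : LinearMap.BilinForm C V) (hψ : ∀ X Y, ψ X Y = -ψ Y X)
    (X Y Z : V) :
    M.d2 (fun X Y => ψ X Y) X Y Z
      = M.nab2 (fun X Y => ψ X Y) X Y Z + M.nab2 (fun X Y => ψ X Y) Y Z X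
        + M.nab2 (fun X Y => ψ X Y) Z X Y := by
  simp only [d2, nab2, ← M.torsion_free, map_sub, LinearMap.sub_apply]
  rw [hψ X Z, D_neg, hψ Y (M.nab X Z), hψ Z (M.nab Y X), hψ X (M.nab Z Y)]
  ring

/-- The covariant derivative `∇A` of a field of endomorphisms `A`, as the linear map sending a
vector field `X` to the endomorphism `∇_X A`. -/
def nabEnd (A : Module.End C V) : V →ₗ[C] Module.End C V :=
  LinearMap.mk₂ C (M.nabA A)
    (fun X Y Z => by simp only [nabA, M.nab_addX, map_add]; abel)
    (fun f X Y => by simp only [nabA, M.nab_smulX, map_smul, smul_sub])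
    (fun X Y Z => by simp only [nabA, M.nab_add, map_add]; abel)
    (fun f X Y => by simp only [nabA, M.nab_leibniz, map_smul, map_add, smul_sub]; abel)

theorem nabEnd_apply (A : Module.End C V) (X Y : V) :
    M.nabEnd A X Y = M.nab X (A Y) - A (M.nab X Y) :=
  rfl

theorem nabEnd_add (A B : Module.End C V) (X : V) :
    M.nabEnd (A + B) X = M.nabEnd A X + M.nabEnd B X := by
  ext Y
  simp only [nabEnd_apply, LinearMap.add_apply, M.nab_add]
  abel

theorem nabEnd_mul (A B : Module.End C V) (X : V) :
    M.nabEnd (A * B) X = M.nabEnd A X * B + A * M.nabEnd B X := by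
  ext Y
  simp only [nabEnd_apply, LinearMap.add_apply, Module.End.mul_apply, map_sub]
  abel

theorem nabEnd_intCast (m : ℤ) : M.nabEnd (m : Module.End C V) = 0 := by
  ext X Y
  simp only [nabEnd_apply, Module.End.intCast_apply, LinearMap.zero_apply]
  exact sub_eq_zero.mpr ((AddMonoidHom.mk' (M.nab X) (M.nab_add X)).map_zsmul m Y)

theorem nab2_omega (A : Module.End C V) (X Y Z : V) :
    M.nab2 (M.omega A) X Y Z = M.metric Y (M.nabEnd A X Z) := by
  have h_metric : M.D X (M.metric Y (A Z))
      = M.metric (M.nab X Y) (A Z) + M.metric Y (M.nab X (A Z)) := M.nab_metric X Y (A Z)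
  change M.D X (M.metric Y (A Z)) - M.metric (M.nab X Y) (A Z) - M.metric Y (A (M.nab X Z)) = _
  rw [nabEnd_apply, map_sub, h_metric]
  ring

variable {M} {A B : Module.End C V}

theorem omega_swap (hA : M.metric.IsSkewAdjoint A) (X Y : V) :
    M.omega A X Y = -M.omega A Y X := by
  rw [isSkewAdjoint_iff] at hA
  exact (M.metric_comm X (A Y)).trans (hA Y X)

theorem isSkewAdjoint_nabEnd (hA : M.metric.IsSkewAdjoint A) (X : V) :
    M.metric.IsSkewAdjoint (M.nabEnd A X) := by
  refine isSkewAdjoint_iff.mpr fun Y Z => ?_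
  rw [M.metric_comm, ← nab2_omega, ← nab2_omega]
  simp only [nab2]
  rw [omega_swap hA Z Y, D_neg, omega_swap hA (M.nab X Z), omega_swap hA Z]
  ring

theorem d2_omega (hA : M.metric.IsSkewAdjoint A) (X Y Z : V) :
    M.d2 (M.omega A) X Y Z
      = M.metric Y (M.nabEnd A X Z) + M.metric Z (M.nabEnd A Y X)
        + M.metric X (M.nabEnd A Z Y) := by
  rw [← nab2_omega, ← nab2_omega, ← nab2_omega]
  exact M.d2_eq_cyclic_sum_nab2 (M.metric.compRight A) (omega_swap hA) X Y Z

end CovariantDerivative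

section Contraction

/-- The vector field `∑ (∇_{e_i} A) (B e_i)`; for `B = 1` it is the divergence of `A`, which
represents the one-form `d*ω_A`. -/
def nabContraction (A B : Module.End C V) : V :=
  ∑ i, M.nabEnd A (M.frame i) (B (M.frame i))

variable {M} {A B : Module.End C V}

theorem codiff2_omega (hA : M.metric.IsSkewAdjoint A) (X : V) :
    M.codiff2 (M.omega A) X = M.metric X (M.nabContraction A 1) := by
  rw [codiff2, nabContraction, map_sum, ← Finset.sum_neg_distrib]
  refine Finset.sum_congr rfl fun i _ => ?_
  rw [nab2_omega, M.metric_comm,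
    isSkewAdjoint_iff.mp (isSkewAdjoint_nabEnd hA (M.frame i)), neg_neg, Module.End.one_apply]

theorem sum_metric_nabEnd_frame (hA : M.metric.IsSkewAdjoint A) (hB : M.metric.IsSkewAdjoint B)
    (X : V) :
    ∑ i, M.metric (M.frame i) (M.nabEnd A (B (M.frame i)) X)
      = M.metric X (M.nabContraction A B) := by
  let S : Module.End C V := (M.nabEnd A).flip X
  calc ∑ i, M.metric (M.frame i) (M.nabEnd A (B (M.frame i)) X)
      = LinearMap.trace C V (S * B) := (M.trace_eq_sum_metric (S * B)).symm
    _ = LinearMap.trace C V (B * S) := LinearMap.trace_mul_comm C S B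
    _ = ∑ i, M.metric (M.frame i) (B (M.nabEnd A (M.frame i) X)) := M.trace_eq_sum_metric (B * S)
    _ = M.metric X (M.nabContraction A B) := by
      rw [nabContraction, map_sum]
      refine Finset.sum_congr rfl fun i _ => ?_
      rw [M.metric_comm, isSkewAdjoint_iff.mp hB,
        isSkewAdjoint_iff.mp (isSkewAdjoint_nabEnd hA (M.frame i)), neg_neg]

theorem Lam_d2_omega (hA : M.metric.IsSkewAdjoint A) (hB : M.metric.IsSkewAdjoint B) (X : V) :
    M.Lam B (M.d2 (M.omega A)) X
      = -((1 / 2 : ℝ) • LinearMap.trace C V (B * M.nabEnd A X))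
        + M.metric X (M.nabContraction A B) := by
  have h_linear (X Z : V) : IsLinearMap C fun Y => M.d2 (M.omega A) X Y Z := by
    constructor <;> intros <;>
      simp only [d2_omega hA, map_add, map_smul, LinearMap.add_apply, LinearMap.smul_apply,
        smul_eq_mul] <;> ring
  have h_trace : ∑ i, M.metric (B (M.frame i)) (M.nabEnd A X (M.frame i))
      = -LinearMap.trace C V (B * M.nabEnd A X) := by
    simp only [M.trace_eq_sum_metric, isSkewAdjoint_iff.mp hB, Finset.sum_neg_distrib,
      Module.End.mul_apply]
  have h_contraction : ∑ i, M.metric X (M.nabEnd A (M.frame i) (B (M.frame i)))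
      = M.metric X (M.nabContraction A B) := by
    rw [nabContraction, map_sum]
  rw [M.Lam_eq_sum B h_linear]
  simp only [d2_omega hA, Finset.sum_add_distrib]
  rw [h_trace, sum_metric_nabEnd_frame hA hB, h_contraction]
  module

theorem nabEnd_anticommutator (h : M.nabEnd (A * B + B * A) = 0) (X : V) :
    M.nabEnd A X * B + M.nabEnd B X * A = -(A * M.nabEnd B X + B * M.nabEnd A X) := by
  have h_leibniz := congr($h X)
  rw [nabEnd_add, nabEnd_mul, nabEnd_mul, LinearMap.zero_apply] at h_leibniz
  rw [← sub_eq_zero, ← h_leibniz]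
  abel

theorem trace_mul_nabEnd_add (h : M.nabEnd (A * B + B * A) = 0) (X : V) :
    LinearMap.trace C V (B * M.nabEnd A X) + LinearMap.trace C V (A * M.nabEnd B X) = 0 := by
  have h_trace := congr(LinearMap.trace C V $(nabEnd_anticommutator h X))
  rw [map_add, map_neg, map_add, LinearMap.trace_mul_comm C _ B,
    LinearMap.trace_mul_comm C _ A] at h_trace
  linear_combination (norm := module) (1 / 2 : ℝ) • h_trace

theorem nabContraction_add (h : M.nabEnd (A * B + B * A) = 0) :
    M.nabContraction A B + M.nabContraction B A
      = -(A (M.nabContraction B 1) + B (M.nabContraction A 1)) := by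
  simp only [nabContraction, map_sum, ← Finset.sum_add_distrib, ← Finset.sum_neg_distrib]
  exact Finset.sum_congr rfl fun i _ => congr($(nabEnd_anticommutator h (M.frame i)) (M.frame i))

theorem Lam_d2_omega_add (hA : M.metric.IsSkewAdjoint A) (hB : M.metric.IsSkewAdjoint B)
    (h : M.nabEnd (A * B + B * A) = 0) :
    M.Lam B (M.d2 (M.omega A)) + M.Lam A (M.d2 (M.omega B))
      = -(act1 A (M.codiff2 (M.omega B)) + act1 B (M.codiff2 (M.omega A))) := by
  ext X
  have h_trace := trace_mul_nabEnd_add h X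
  have h_contraction := congr(M.metric X $(nabContraction_add h))
  simp only [map_add, map_neg, ← isSkewAdjoint_iff.mp hA, neg_add,
    ← isSkewAdjoint_iff.mp hB] at h_contraction
  simp only [Pi.add_apply, Pi.neg_apply, act1, Lam_d2_omega hA hB, Lam_d2_omega hB hA,
    codiff2_omega hA, codiff2_omega hB]
  linear_combination (norm := module) h_contraction - (1 / 2 : ℝ) • h_trace

theorem Lam_self_d2_omega (hA : M.metric.IsSkewAdjoint A) (h_sq : A * A = -1) :
    M.Lam A (M.d2 (M.omega A)) = -act1 A (M.codiff2 (M.omega A)) := by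
  have h_parallel : M.nabEnd (A * A + A * A) = 0 := by
    have h_cast : A * A + A * A = ((-2 : ℤ) : Module.End C V) := by
      rw [h_sq]; norm_num
    rw [h_cast, nabEnd_intCast]
  have h_polarised := Lam_d2_omega_add hA hA h_parallel
  linear_combination (norm := module) (1 / 2 : ℝ) • h_polarised

end Contraction

section AdaptedBasis

/-- An adapted basis of almost complex structures: anticommuting `I` and `J`, together with
`K = IJ`, all squaring to `-1`.  Compatibility with the metric is encoded as skew-adjointness,
equivalent to `g(AX, AY) = g(X, Y)` because `A² = -1`. -/
structure IsAdaptedBasis (I J K : Module.End C V) : Prop where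
  sq_left : I * I = -1
  sq_mid : J * J = -1
  mul_eq : I * J = K
  anticomm : J * I = -K
  skew_left : M.metric.IsSkewAdjoint I
  skew_mid : M.metric.IsSkewAdjoint J

variable {M} {I J K : Module.End C V}

theorem IsAdaptedBasis.mul_left (h : M.IsAdaptedBasis I J K) : K * J = -I := by
  rw [← h.mul_eq, mul_assoc, h.sq_mid, mul_neg_one]

theorem IsAdaptedBasis.mul_right (h : M.IsAdaptedBasis I J K) : J * K = I := by
  rw [← h.mul_eq, ← mul_assoc, h.anticomm, neg_mul, h.mul_left, neg_neg]

theorem IsAdaptedBasis.skew_right (h : M.IsAdaptedBasis I J K) : M.metric.IsSkewAdjoint K := by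
  refine isSkewAdjoint_iff.mpr fun X Y => ?_
  have h_JI : J (I Y) = -K Y := congr($(h.anticomm) Y)
  rw [← h.mul_eq, Module.End.mul_apply, isSkewAdjoint_iff.mp h.skew_left,
    isSkewAdjoint_iff.mp h.skew_mid, neg_neg, h_JI, map_neg, h.mul_eq]

theorem IsAdaptedBasis.rotate (h : M.IsAdaptedBasis I J K) : M.IsAdaptedBasis J K I where
  sq_left := h.sq_mid
  sq_mid := by
    calc K * K = I * (J * K) := by rw [← mul_assoc, h.mul_eq]
      _ = -1 := by rw [h.mul_right, h.sq_left]
  mul_eq := h.mul_right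
  anticomm := h.mul_left
  skew_left := h.skew_mid
  skew_mid := h.skew_right

theorem IsAdaptedBasis.act1_Lam_d2_omega (h : M.IsAdaptedBasis I J K) :
    act1 I (M.Lam K (M.d2 (M.omega J))) + act1 I (M.Lam J (M.d2 (M.omega K)))
      = -M.Lam J (M.d2 (M.omega J)) + M.Lam K (M.d2 (M.omega K)) := by
  ext X
  have h_parallel : M.nabEnd (J * K + K * J) = 0 := by
    rw [h.mul_right, h.mul_left, add_neg_cancel]
    exact_mod_cast M.nabEnd_intCast 0
  have h_mixed := congr($(Lam_d2_omega_add h.skew_mid h.skew_right h_parallel) (I X))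
  have h_JI : J (I X) = -K X := congr($(h.anticomm) X)
  have h_KI : K (I X) = J X := congr($(h.rotate.mul_right) X)
  rw [Lam_self_d2_omega h.skew_mid h.sq_mid, Lam_self_d2_omega h.skew_right h.rotate.sq_mid]
  simp only [Pi.add_apply, Pi.neg_apply, act1, h_JI, h_KI, codiff2_omega h.skew_mid,
    codiff2_omega h.skew_right, map_neg, LinearMap.neg_apply] at h_mixed ⊢
  linear_combination -h_mixed

/-- The endomorphism of the module of vector fields given by a map that respects combinations
`f • X + Y`, the form in which linearity is stated for the almost complex structures of `AQH`. -/
def endOfSMulAdd (A : V → V) (hA : ∀ (f : C) X Y, A (f • X + Y) = f • A X + A Y) :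
    Module.End C V where
  toFun := A
  map_add' X Y := by simpa using hA 1 X Y
  map_smul' f X := by
    have h_zero : A 0 = 0 := by simpa using hA 1 0 0
    simpa [h_zero] using hA f X 0

theorem isSkewAdjoint_endOfSMulAdd {A : V → V}
    (hA : ∀ (f : C) X Y, A (f • X + Y) = f • A X + A Y) (h_sq : ∀ X, A (A X) = -X)
    (h_isometry : ∀ X Y, M.g (A X) (A Y) = M.g X Y) :
    M.metric.IsSkewAdjoint (endOfSMulAdd A hA) := by
  refine isSkewAdjoint_iff.mpr fun X Y => ?_
  calc M.metric (A X) Y = -M.metric (A X) (A (A Y)) := by rw [h_sq, map_neg, neg_neg]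
    _ = -M.metric X (A Y) := congrArg Neg.neg (h_isometry X (A Y))

variable (M)

theorem isAdaptedBasis :
    M.IsAdaptedBasis (endOfSMulAdd M.I M.I_lin) (endOfSMulAdd M.J M.J_lin)
      (endOfSMulAdd M.K M.K_lin) where
  sq_left := LinearMap.ext M.I_sq
  sq_mid := LinearMap.ext M.J_sq
  mul_eq := LinearMap.ext fun X => (M.K_def X).symm
  anticomm := LinearMap.ext fun X => by
    change M.J (M.I X) = -M.K X
    rw [M.K_def, M.anticomm, neg_neg]
  skew_left := isSkewAdjoint_endOfSMulAdd M.I_lin M.I_sq M.I_metric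
  skew_mid := isSkewAdjoint_endOfSMulAdd M.J_lin M.J_sq M.J_metric

end AdaptedBasis

end AQH

open AQH in
/-- On any almost quaternion-Hermitian manifold, for any local
adapted basis `I, J, K`: `IΛ_K dω_J + IΛ_J dω_K = -Λ_J dω_J + Λ_K dω_K`,
together with the identities obtained by cyclic permutation of `(I, J, K)`. -/
theorem statement6 {n : ℕ} {C V : Type*} [CommRing C] [Algebra ℝ C] [AddCommGroup V]
    [Module C V] [Module ℝ V] [IsScalarTower ℝ C V] (M : AQH n C V) :
    (act1 M.I (M.Lam M.K (M.d2 (M.omega M.J))) + act1 M.I (M.Lam M.J (M.d2 (M.omega M.K)))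
      = -M.Lam M.J (M.d2 (M.omega M.J)) + M.Lam M.K (M.d2 (M.omega M.K))) ∧
    (act1 M.J (M.Lam M.I (M.d2 (M.omega M.K))) + act1 M.J (M.Lam M.K (M.d2 (M.omega M.I)))
      = -M.Lam M.K (M.d2 (M.omega M.K)) + M.Lam M.I (M.d2 (M.omega M.I))) ∧
    (act1 M.K (M.Lam M.J (M.d2 (M.omega M.I))) + act1 M.K (M.Lam M.I (M.d2 (M.omega M.J)))
      = -M.Lam M.I (M.d2 (M.omega M.I)) + M.Lam M.J (M.d2 (M.omega M.J))) := by
  have h := M.isAdaptedBasis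
  exact ⟨h.act1_Lam_d2_omega, h.rotate.act1_Lam_d2_omega, h.rotate.rotate.act1_Lam_d2_omega⟩
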